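/- Let Ã be a symmetric N×N real matrix, W an H×H real matrix, V an F×H real matrix, and X an N×F real matrix, and suppose K = ρ(Ã) · ‖W‖₂ < 1. Let H* be the unique fixed point of the reservoir map Φ(M) = tanh(Ã M W + X V). Then for every initial condition H₀ ∈ ℝ^{N×H}, the iterates defined by H_{t+1} = Φ(H_t) converge to H* as t → ∞ (in the Frobenius norm); in particular the limit is independent of the initial condition. -/

import Mathlib

noncomputable def frobNorm {m n : Type*} [Fintype m] [Fintype n]
    (M : Matrix m n ℝ) : ℝ :=
  Real.sqrt (∑ i, ∑ j, (M i j) ^ 2)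

noncomputable def specNorm {m n : ℕ} (M : Matrix (Fin m) (Fin n) ℝ) : ℝ :=
  ‖LinearMap.toContinuousLinearMap (Matrix.toEuclideanLin M)‖

noncomputable def specRad {n : ℕ} (A : Matrix (Fin n) (Fin n) ℝ)
    (hA : A.IsHermitian) : ℝ :=
  ⨆ i, |hA.eigenvalues i|

noncomputable def mtanh {m n : Type*} (M : Matrix m n ℝ) : Matrix m n ℝ :=
  Matrix.of fun i j => Real.tanh (M i j)

noncomputable def resMap {N F Hd : ℕ} (Atil : Matrix (Fin N) (Fin N) ℝ)
    (W : Matrix (Fin Hd) (Fin Hd) ℝ) (V : Matrix (Fin F) (Fin Hd) ℝ)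
    (X : Matrix (Fin N) (Fin F) ℝ) (M : Matrix (Fin N) (Fin Hd) ℝ) :
    Matrix (Fin N) (Fin Hd) ℝ :=
  mtanh (Atil * M * W + X * V)

theorem aux_tanh_lip (x y : ℝ) : |Real.tanh x - Real.tanh y| ≤ |x - y| := by
  have hd : ∀ z : ℝ, HasDerivAt Real.tanh (1 / Real.cosh z ^ 2) z := by
    intro z
    have h := (Real.hasDerivAt_sinh z).div (Real.hasDerivAt_cosh z) (Real.cosh_pos z).ne'
    have e : Real.tanh = Real.sinh / Real.cosh := by
      funext w; simp [Real.tanh_eq_sinh_div_cosh]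
    rw [e]
    have e2 : Real.cosh z * Real.cosh z - Real.sinh z * Real.sinh z = 1 := by
      have := Real.cosh_sq z
      linarith
    rw [e2] at h
    exact h
  have hL : LipschitzWith 1 Real.tanh := by
    apply lipschitzWith_of_nnnorm_deriv_le (fun z => (hd z).differentiableAt)
    intro z
    rw [(hd z).deriv, ← NNReal.coe_le_coe, coe_nnnorm, Real.norm_of_nonneg (by positivity)]
    have h1 := Real.one_le_cosh z
    rw [NNReal.coe_one, div_le_one (by positivity)]
    nlinarith
  have := hL.dist_le_mul x y
  simpa [Real.dist_eq] using this

theorem aux_mulVec {m n : ℕ} (A : Matrix (Fin m) (Fin n) ℝ) (x : Fin n → ℝ) :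
    ∑ i, (A.mulVec x i) ^ 2 ≤ specNorm A ^ 2 * ∑ j, x j ^ 2 := by
  have h := (LinearMap.toContinuousLinearMap (Matrix.toEuclideanLin A)).le_opNorm (WithLp.toLp 2 x)
  have h2 := pow_le_pow_left₀ (norm_nonneg _) h 2
  rw [mul_pow, EuclideanSpace.norm_sq_eq, EuclideanSpace.norm_sq_eq] at h2
  simpa [specNorm, Matrix.toLpLin_apply] using h2

theorem aux_mul_left {m n k : ℕ} (A : Matrix (Fin m) (Fin n) ℝ) (M : Matrix (Fin n) (Fin k) ℝ) :
    ∑ i, ∑ j, ((A * M) i j) ^ 2 ≤ specNorm A ^ 2 * ∑ i, ∑ j, (M i j) ^ 2 := by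
  rw [Finset.sum_comm, Finset.sum_comm (f := fun i j => (M i j) ^ 2), Finset.mul_sum]
  exact Finset.sum_le_sum fun j _ => aux_mulVec A (fun i => M i j)

open scoped Matrix.Norms.L2Operator in
theorem aux_spec_eq {m n : ℕ} (A : Matrix (Fin m) (Fin n) ℝ) : specNorm A = ‖A‖ := by
  rw [Matrix.l2_opNorm_def]; rfl

theorem aux_spec_transpose {m n : ℕ} (A : Matrix (Fin m) (Fin n) ℝ) :
    specNorm A.transpose = specNorm A := by
  rw [aux_spec_eq, aux_spec_eq, ← Matrix.l2_opNorm_conjTranspose A,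
    Matrix.conjTranspose_eq_transpose_of_trivial]

theorem aux_mul_right {m n k : ℕ} (M : Matrix (Fin m) (Fin n) ℝ) (W : Matrix (Fin n) (Fin k) ℝ) :
    ∑ i, ∑ j, ((M * W) i j) ^ 2 ≤ specNorm W ^ 2 * ∑ i, ∑ j, (M i j) ^ 2 := by
  have h := aux_mul_left W.transpose M.transpose
  rw [aux_spec_transpose, ← Matrix.transpose_mul, Finset.sum_comm,
    Finset.sum_comm (f := fun i j => (M.transpose i j) ^ 2)] at h
  exact h

open scoped Matrix.Norms.L2Operator in
theorem aux_spec_le {n : ℕ} (A : Matrix (Fin n) (Fin n) ℝ) (hA : A.IsHermitian) :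
    specNorm A ≤ specRad A hA := by
  rw [aux_spec_eq]
  have h := hA.spectral_theorem
  rw [Unitary.conjStarAlgAut_apply] at h
  have h2 : ‖A‖ = ‖(Matrix.diagonal (RCLike.ofReal ∘ hA.eigenvalues) : Matrix (Fin n) (Fin n) ℝ)‖ := by
    conv_lhs => rw [h]
    rw [← Unitary.coe_star, CStarRing.norm_mul_coe_unitary, CStarRing.norm_coe_unitary_mul]
  rw [h2, Matrix.l2_opNorm_diagonal]
  have h0 : 0 ≤ specRad A hA := Real.iSup_nonneg fun i => abs_nonneg _
  rw [pi_norm_le_iff_of_nonneg h0]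
  intro i
  exact le_ciSup (f := fun i => |hA.eigenvalues i|) (Set.finite_range _).bddAbove i

theorem aux_contract {N F Hd : ℕ}
    (A : Matrix (Fin N) (Fin N) ℝ) (hA : A.IsHermitian)
    (W : Matrix (Fin Hd) (Fin Hd) ℝ) (V : Matrix (Fin F) (Fin Hd) ℝ)
    (X : Matrix (Fin N) (Fin F) ℝ) (P Q : Matrix (Fin N) (Fin Hd) ℝ) :
    frobNorm (resMap A W V X P - resMap A W V X Q)
      ≤ (specRad A hA * specNorm W) * frobNorm (P - Q) := by
  have hs : 0 ≤ specNorm A := norm_nonneg _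
  have hw : 0 ≤ specNorm W := norm_nonneg _
  have hle := aux_spec_le A hA
  have hr : 0 ≤ specRad A hA := hs.trans hle
  unfold frobNorm
  apply Real.sqrt_le_iff.2
  refine ⟨by positivity, ?_⟩
  rw [mul_pow, Real.sq_sqrt (by positivity)]
  calc _ ≤ ∑ i, ∑ j, ((A * (P - Q) * W) i j) ^ 2 := by
        refine Finset.sum_le_sum fun i _ => Finset.sum_le_sum fun j _ => ?_
        apply sq_le_sq.2
        refine (aux_tanh_lip _ _).trans (le_of_eq ?_)
        rw [Matrix.mul_sub, Matrix.sub_mul]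
        simp
    _ ≤ specNorm W ^ 2 * ∑ i, ∑ j, ((A * (P - Q)) i j) ^ 2 := aux_mul_right _ _
    _ ≤ specNorm W ^ 2 * (specNorm A ^ 2 * ∑ i, ∑ j, ((P - Q) i j) ^ 2) := by
        gcongr; exact aux_mul_left _ _
    _ ≤ specNorm W ^ 2 * (specRad A hA ^ 2 * ∑ i, ∑ j, ((P - Q) i j) ^ 2) := by
        gcongr
    _ = _ := by ring

/-- Under K = ρ(Ã)·‖W‖₂ < 1, the iterates converge (in Frobenius norm) to the
unique fixed point from every initial condition. -/
theorem reservoir_iterates_tendsto_fixedPoint {N F Hd : ℕ}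
    (Atil : Matrix (Fin N) (Fin N) ℝ) (hA : Atil.IsHermitian)
    (W : Matrix (Fin Hd) (Fin Hd) ℝ) (V : Matrix (Fin F) (Fin Hd) ℝ)
    (X : Matrix (Fin N) (Fin F) ℝ)
    (hK : specRad Atil hA * specNorm W < 1)
    (Hstar : Matrix (Fin N) (Fin Hd) ℝ)
    (hfix : resMap Atil W V X Hstar = Hstar) :
    ∀ H0 : Matrix (Fin N) (Fin Hd) ℝ,
      Filter.Tendsto (fun t : ℕ => frobNorm ((resMap Atil W V X)^[t] H0 - Hstar))
        Filter.atTop (nhds 0) := by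
  intro H0
  have hK0 : 0 ≤ specRad Atil hA * specNorm W :=
    mul_nonneg ((norm_nonneg _ : 0 ≤ specNorm Atil).trans (aux_spec_le Atil hA)) (norm_nonneg _)
  have hb : ∀ t : ℕ, frobNorm ((resMap Atil W V X)^[t] H0 - Hstar)
      ≤ (specRad Atil hA * specNorm W) ^ t * frobNorm (H0 - Hstar) := by
    intro t
    induction t with
    | zero => simp
    | succ k ih =>
      rw [Function.iterate_succ_apply']
      have h := aux_contract Atil hA W V X ((resMap Atil W V X)^[k] H0) Hstar
      rw [hfix] at h
      refine h.trans ((mul_le_mul_of_nonneg_left ih hK0).trans (le_of_eq ?_))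
      ring
  have hl := (tendsto_pow_atTop_nhds_zero_of_lt_one hK0 hK).mul_const (frobNorm (H0 - Hstar))
  rw [zero_mul] at hl
  exact squeeze_zero (fun t => Real.sqrt_nonneg _) hb hl
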